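/- There exists a sequence (f_v)_{v ∈ ℕ}, where f_v is a 3-uniform hypergraph property on v vertices, together with constants c, C > 0 and v₀ ∈ ℕ, such that for all v ≥ v₀: s(f_v) ≤ C·v^{3/2} and bs(f_v) ≥ c·v^{9/4}; that is, s(f_v) = O(v^{3/2}) and bs(f_v) = Ω(v^{9/4}). -/

import Mathlib

open Finset

/-- The coordinate set: `k`-element subsets of `Fin v`. -/
abbrev KSet (v k : ℕ) : Type := {S : Finset (Fin v) // S.card = k}

/-- A `k`-uniform hypergraph on `Fin v`: a Boolean function on `k`-sets. -/
abbrev HGraph (v k : ℕ) : Type := KSet v k → Bool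

/-- Sensitivity of `f` at input `x`: the number of coordinates whose flip changes `f`. -/
def localSens {I : Type} [Fintype I] [DecidableEq I]
    (f : (I → Bool) → Bool) (x : I → Bool) : ℕ :=
  (Finset.univ.filter fun i => f (Function.update x i (!x i)) ≠ f x).card

/-- Sensitivity of `f`: maximum of `localSens f x` over all inputs `x`. -/
def sens {I : Type} [Fintype I] [DecidableEq I] (f : (I → Bool) → Bool) : ℕ :=
  Finset.univ.sup (localSens f)

/-- `sensOn b f` is `s^b(f)`: max sensitivity over inputs with `f x = b`. -/
def sensOn {I : Type} [Fintype I] [DecidableEq I] (b : Bool) (f : (I → Bool) → Bool) : ℕ :=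
  (Finset.univ.filter fun x => f x = b).sup (localSens f)

/-- Flip all the coordinates of `x` in the block `B`. -/
def flipBlock {I : Type} [DecidableEq I] (x : I → Bool) (B : Finset I) : I → Bool :=
  fun i => if i ∈ B then !x i else x i

/-- Block sensitivity of `f` at `x`: maximum number of pairwise disjoint sensitive blocks. -/
noncomputable def localBlockSens {I : Type} [Fintype I] [DecidableEq I]
    (f : (I → Bool) → Bool) (x : I → Bool) : ℕ :=
  sSup {n : ℕ | ∃ B : Fin n → Finset I,
    (∀ j, f (flipBlock x (B j)) ≠ f x) ∧
    ∀ j j', j ≠ j' → Disjoint (B j) (B j')}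

/-- Block sensitivity of `f`. -/
noncomputable def blockSens {I : Type} [Fintype I] [DecidableEq I]
    (f : (I → Bool) → Bool) : ℕ :=
  Finset.univ.sup (localBlockSens f)

/-- Image of a `k`-set under a permutation of the vertices. -/
def permKSet {v k : ℕ} (σ : Equiv.Perm (Fin v)) (S : KSet v k) : KSet v k :=
  ⟨S.1.map σ.toEmbedding, by rw [Finset.card_map]; exact S.2⟩

/-- A `k`-uniform hypergraph property: invariance under all vertex permutations,
where `(σ • G) S = G (σ⁻¹ S)`. -/
def IsHypergraphProperty {v k : ℕ} (f : HGraph v k → Bool) : Prop :=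
  ∀ (σ : Equiv.Perm (Fin v)) (G : HGraph v k),
    f (fun S => G (permKSet σ⁻¹ S)) = f G

/-
The property is "there is an isolated clique with `q ≈ v ^ (1 / 4)` vertices": a `q`-set `S` all
of whose triples are edges, while no other edge meets `S` in two or more vertices. Such an `S` is
destroyed only by flipping one of the at most `q² v` triples that meet it in two vertices or more.
Two distinct `q`-sets sharing two vertices prescribe contradictory values at three or more
triples, so they cannot both be one flip away from being isolated cliques of `G`; hence the
`q`-sets that can be completed by a flip share pairwise at most one vertex, and there are `O(v² /
q²)` of them. Both bounds are of order `v ^ (3 / 2)`. On the other hand, a family of `q`-sets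
sharing pairwise at most two vertices gives disjoint sensitive blocks at the empty hypergraph, and
the graphs of the polynomials of degree at most two over `ZMod p`, with `p ≈ v / q`, restricted to
`q` points, form such a family with `p ^ 3` members, which is of order `v ^ (9 / 4)`.
-/

section BlockSensitivity

variable {I : Type} [DecidableEq I]

lemma flipBlock_empty (x : I → Bool) : flipBlock x ∅ = x :=
  funext fun i => if_neg (notMem_empty i)

lemma card_le_blockSens [Fintype I] {ι : Type*} {f : (I → Bool) → Bool} {x : I → Bool}
    {s : Finset ι} {B : ι → Finset I} (hB : ∀ j ∈ s, f (flipBlock x (B j)) ≠ f x)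
    (hdisj : (s : Set ι).PairwiseDisjoint B) : #s ≤ blockSens f := by
  refine le_trans (le_csSup ⟨Fintype.card I, ?_⟩ ?_)
    (Finset.le_sup (f := localBlockSens f) (mem_univ x))
  · rintro n ⟨B, hB, hdisj⟩
    have hne (j : Fin n) : (B j).Nonempty := by
      refine nonempty_iff_ne_empty.2 fun hempty => hB j ?_
      rw [hempty, flipBlock_empty]
    calc n = #(univ : Finset (Fin n)) := (card_fin n).symm
      _ ≤ #(univ.biUnion B) :=
        card_le_card_biUnion (fun j _ j' _ hjj' => hdisj j j' hjj') fun j _ => hne j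
      _ ≤ Fintype.card I := card_le_univ _
  · refine ⟨fun j => B (s.equivFin.symm j), fun j => hB _ (coe_mem _), fun j j' hjj' => ?_⟩
    exact hdisj (coe_mem _) (coe_mem _) fun h => hjj' (s.equivFin.symm.injective (Subtype.ext h))

end BlockSensitivity

section Packing

variable {α : Type*} [DecidableEq α] {t q : ℕ}

lemma card_filter_le_card_inter_le (U S : Finset α) (k t : ℕ) :
    #{T ∈ U.powersetCard k | t ≤ #(T ∩ S)} ≤ (#S).choose t * (#U).choose (k - t) := by
  have hcover : {T ∈ U.powersetCard k | t ≤ #(T ∩ S)} ⊆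
      (S.powersetCard t ×ˢ U.powersetCard (k - t)).image fun P => P.1 ∪ P.2 := by
    intro T hT
    obtain ⟨hTU, ht⟩ := mem_filter.1 hT
    obtain ⟨hTU, hTk⟩ := mem_powersetCard.1 hTU
    obtain ⟨P, hP, hPt⟩ := exists_subset_card_eq ht
    have hPT : P ⊆ T := hP.trans inter_subset_left
    refine mem_image.2 ⟨(P, T \ P), mem_product.2 ⟨?_, ?_⟩, union_sdiff_of_subset hPT⟩
    · exact mem_powersetCard.2 ⟨hP.trans inter_subset_right, hPt⟩
    · exact mem_powersetCard.2
        ⟨sdiff_subset.trans hTU, by rw [card_sdiff_of_subset hPT, hTk, hPt]⟩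
  calc _ ≤ _ := card_le_card hcover
    _ ≤ #(S.powersetCard t ×ˢ U.powersetCard (k - t)) := card_image_le
    _ = _ := by rw [card_product, card_powersetCard, card_powersetCard]

/-- A partial Steiner system (or `t`-packing): a family of `q`-sets, any two of which share fewer
than `t` points, so that every `t`-set is covered at most once. -/
structure IsPacking (t q : ℕ) (𝓢 : Finset (Finset α)) : Prop where
  sized : (𝓢 : Set (Finset α)).Sized q
  card_inter_lt : (𝓢 : Set (Finset α)).Pairwise fun S S' => #(S ∩ S') < t

namespace IsPacking

variable {𝓢 : Finset (Finset α)}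

lemma eq_of_subset (h𝓢 : IsPacking t q 𝓢) {S S' T : Finset α} (hS : S ∈ 𝓢) (hS' : S' ∈ 𝓢)
    (ht : t ≤ #T) (hTS : T ⊆ S) (hTS' : T ⊆ S') : S = S' := by
  by_contra hne
  exact (ht.trans (card_le_card (subset_inter hTS hTS'))).not_gt (h𝓢.card_inter_lt hS hS' hne)

lemma card_mul_choose_le [Fintype α] (h𝓢 : IsPacking t q 𝓢) :
    #𝓢 * q.choose t ≤ (Fintype.card α).choose t := by
  have hdisj : (𝓢 : Set (Finset α)).PairwiseDisjoint (powersetCard t) := by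
    refine fun S hS S' hS' hne => Finset.disjoint_left.2 fun T hT hT' => hne ?_
    rw [mem_powersetCard] at hT hT'
    exact h𝓢.eq_of_subset hS hS' hT.2.ge hT.1 hT'.1
  calc #𝓢 * q.choose t = ∑ S ∈ 𝓢, #(S.powersetCard t) :=
        (sum_const_nat fun S hS => by rw [card_powersetCard, h𝓢.sized hS]).symm
    _ = #(𝓢.biUnion (powersetCard t)) := (card_biUnion hdisj).symm
    _ ≤ #((univ : Finset α).powersetCard t) :=
        card_le_card (biUnion_subset.2 fun S _ => powersetCard_mono (subset_univ S))
    _ = (Fintype.card α).choose t := card_powersetCard t univ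

end IsPacking

/-- The graph of a polynomial `P`, restricted to the points `x i` and carried into `α` along the
embedding `e`. -/
def evalGraph {F ι : Type*} [Semiring F] [Fintype ι] (x : ι → F) (e : ι × F ↪ α)
    (P : Polynomial F) : Finset α :=
  univ.map ⟨fun i => e (i, P.eval (x i)), fun _ _ h => congrArg Prod.fst (e.injective h)⟩

lemma eq_of_le_card_evalGraph_inter {F ι : Type*} [CommRing F] [IsDomain F] [Fintype ι]
    (x : ι ↪ F) (e : ι × F ↪ α) {P Q : Polynomial F}
    (hP : P ∈ Polynomial.degreeLT F t) (hQ : Q ∈ Polynomial.degreeLT F t)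
    (ht : t ≤ #(evalGraph x e P ∩ evalGraph x e Q)) : P = Q := by
  classical
  set s : Finset ι := {i | P.eval (x i) = Q.eval (x i)}
  have hinter : evalGraph x e P ∩ evalGraph x e Q ⊆ s.image fun i => e (i, P.eval (x i)) := by
    intro a ha
    obtain ⟨haP, haQ⟩ := mem_inter.1 ha
    obtain ⟨i, -, rfl⟩ := mem_map.1 haP
    obtain ⟨j, -, hji⟩ := mem_map.1 haQ
    obtain ⟨rfl, heval⟩ := Prod.ext_iff.1 (e.injective hji)
    exact mem_image.2 ⟨j, by simpa [s] using heval.symm, rfl⟩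
  have hts : (t : WithBot ℕ) ≤ #s := by
    exact_mod_cast ht.trans ((card_le_card hinter).trans card_image_le)
  exact Polynomial.eq_of_degrees_lt_of_eval_index_eq s x.injective.injOn
    ((Polynomial.mem_degreeLT.1 hP).trans_le hts) ((Polynomial.mem_degreeLT.1 hQ).trans_le hts)
    fun i hi => (mem_filter.1 hi).2

lemma exists_isPacking_card_eq_pow (F : Type*) [Field F] [Fintype F] [Fintype α] (htq : t ≤ q)
    (hqF : q ≤ Fintype.card F) (hqα : q * Fintype.card F ≤ Fintype.card α) :
    ∃ 𝓢 : Finset (Finset α), IsPacking t q 𝓢 ∧ #𝓢 = Fintype.card F ^ t := by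
  classical
  obtain ⟨x⟩ : Nonempty (Fin q ↪ F) := Function.Embedding.nonempty_of_card_le (by simpa using hqF)
  obtain ⟨e⟩ : Nonempty (Fin q × F ↪ α) :=
    Function.Embedding.nonempty_of_card_le (by simpa using hqα)
  let poly (c : Fin t → F) : Polynomial.degreeLT F t := (Polynomial.degreeLTEquiv F t).symm c
  let S (c : Fin t → F) : Finset α := evalGraph x e (poly c : Polynomial F)
  have hcard (c : Fin t → F) : #(S c) = q := by simp [S, evalGraph]
  have heq {c c' : Fin t → F} (h : t ≤ #(S c ∩ S c')) : c = c' :=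
    (Polynomial.degreeLTEquiv F t).symm.injective
      (Subtype.ext (eq_of_le_card_evalGraph_inter x e (poly c).2 (poly c').2 h))
  have hinj : Function.Injective S := fun c c' h => heq (by rwa [← h, inter_self, hcard])
  refine ⟨univ.image S, ⟨?_, ?_⟩, ?_⟩
  · intro _ hc
    obtain ⟨c, -, rfl⟩ := mem_image.1 hc
    exact hcard c
  · intro _ hc _ hc' hne
    obtain ⟨c, -, rfl⟩ := mem_image.1 hc
    obtain ⟨c', -, rfl⟩ := mem_image.1 hc'
    exact lt_of_not_ge fun h => hne (congrArg S (heq h))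
  · rw [card_image_of_injective _ hinj, card_univ, Fintype.card_fun, Fintype.card_fin]

end Packing

section SeparatingSets

variable {α : Type*} [DecidableEq α]

/-- The `k`-sets on which `S` and `S'` impose contradictory conditions if both are to be isolated
cliques: they meet each of `S` and `S'` in two vertices, and lie in exactly one of them. -/
def separatingSets (k : ℕ) (S S' : Finset α) : Finset (Finset α) :=
  {T ∈ (S ∪ S').powersetCard k | 2 ≤ #(T ∩ S) ∧ 2 ≤ #(T ∩ S') ∧ ¬(T ⊆ S ↔ T ⊆ S')}

lemma notMem_of_mem_symmDiff {S S' P : Finset α} {x : α} (hx : x ∈ symmDiff S S')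
    (hP : P ⊆ S ∩ S') : x ∉ P :=
  fun hxP => Finset.disjoint_left.1 (disjoint_symmDiff_inf S S') hx (hP hxP)

lemma insert_mem_separatingSets {j : ℕ} (hj : 2 ≤ j) {S S' P : Finset α} {x : α}
    (hP : P ∈ (S ∩ S').powersetCard j) (hx : x ∈ symmDiff S S') :
    insert x P ∈ separatingSets (j + 1) S S' := by
  obtain ⟨hPSS', rfl⟩ := mem_powersetCard.1 hP
  obtain ⟨hPS, hPS'⟩ := subset_inter_iff.1 hPSS'
  refine mem_filter.2 ⟨mem_powersetCard.2 ⟨insert_subset ?_ ?_, ?_⟩, ?_, ?_, ?_⟩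
  · exact symmDiff_subset_union hx
  · exact hPS.trans subset_union_left
  · exact card_insert_of_notMem (notMem_of_mem_symmDiff hx hPSS')
  · exact hj.trans (card_le_card (subset_inter (subset_insert x P) hPS))
  · exact hj.trans (card_le_card (subset_inter (subset_insert x P) hPS'))
  · rw [insert_subset_iff, insert_subset_iff]
    rw [mem_symmDiff] at hx
    tauto

lemma choose_mul_card_symmDiff_le_card_separatingSets {j : ℕ} (hj : 2 ≤ j) (S S' : Finset α) :
    (#(S ∩ S')).choose j * #(symmDiff S S') ≤ #(separatingSets (j + 1) S S') := by
  rw [← card_powersetCard, ← card_product]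
  refine card_le_card_of_injOn (fun Px => insert Px.2 Px.1) (fun Px hPx => ?_) ?_
  · obtain ⟨hP, hx⟩ := mem_product.1 hPx
    exact insert_mem_separatingSets hj hP hx
  · rintro ⟨P, x⟩ hPx ⟨P', x'⟩ hPx' heq
    obtain ⟨hP, hx⟩ := mem_product.1 hPx
    obtain ⟨hP', hx'⟩ := mem_product.1 hPx'
    replace heq : insert x P = insert x' P' := heq
    obtain rfl : x = x' := (mem_insert.1 (heq ▸ mem_insert_self x P)).resolve_right
      (notMem_of_mem_symmDiff hx (mem_powersetCard.1 hP').1)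
    have hxP : x ∉ P := notMem_of_mem_symmDiff hx (mem_powersetCard.1 hP).1
    have hxP' : x ∉ P' := notMem_of_mem_symmDiff hx' (mem_powersetCard.1 hP').1
    have hPP' : P = P' := by rw [← erase_insert hxP, heq, erase_insert hxP']
    rw [hPP']

lemma two_lt_card_separatingSets {S S' : Finset α} (hcard : #S = #S') (hS : 4 ≤ #S)
    (hne : S ≠ S') (hinter : 2 ≤ #(S ∩ S')) : 2 < #(separatingSets 3 S S') := by
  refine lt_of_lt_of_le ?_ (choose_mul_card_symmDiff_le_card_separatingSets le_rfl S S')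
  have hsymm : #(symmDiff S S') = 2 * #(S \ S') := by
    rw [symmDiff_def, sup_eq_union, card_union_of_disjoint disjoint_sdiff_sdiff,
      ← card_sdiff_comm hcard, two_mul]
  have hsplit : #(S \ S') + #(S ∩ S') = #S := card_sdiff_add_card_inter S S'
  have hpos : 0 < #(S \ S') :=
    card_pos.2 (sdiff_nonempty.2 fun hsub => hne (eq_of_subset_of_card_le hsub hcard.ge))
  rw [hsymm]
  rcases hinter.eq_or_lt with htwo | hthree
  · rw [← htwo, Nat.choose_self]
    omega
  · have hchoose : 3 ≤ (#(S ∩ S')).choose 2 := Nat.choose_le_choose 2 hthree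
    nlinarith

end SeparatingSets

/-- `S` is an isolated clique of `G`: every `k`-set inside `S` is an edge, and no other edge meets
`S` in two or more vertices. The single condition below says both only for `2 ≤ k`. -/
def IsIsolatedClique {v k : ℕ} (G : HGraph v k) (S : Finset (Fin v)) : Prop :=
  ∀ T : KSet v k, 2 ≤ #(T.1 ∩ S) → (G T = true ↔ T.1 ⊆ S)

open Classical in
/-- The property of having an isolated clique with `q` vertices, whose sensitivity and block
sensitivity are far apart. -/
noncomputable def hasIsolatedClique {v k : ℕ} (q : ℕ) (G : HGraph v k) : Bool :=
  decide (∃ S : Finset (Fin v), #S = q ∧ IsIsolatedClique G S)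

section IsolatedClique

variable {v k q : ℕ} {G : HGraph v k} {S S' : Finset (Fin v)}

lemma hasIsolatedClique_eq_true_iff :
    hasIsolatedClique q G = true ↔ ∃ S : Finset (Fin v), #S = q ∧ IsIsolatedClique G S := by
  simp [hasIsolatedClique]

lemma hasIsolatedClique_eq_false_iff :
    hasIsolatedClique q G = false ↔ ∀ S : Finset (Fin v), #S = q → ¬ IsIsolatedClique G S := by
  rw [← Bool.not_eq_true, hasIsolatedClique_eq_true_iff, not_exists]
  simp only [not_and]

lemma permKSet_permKSet_inv (σ : Equiv.Perm (Fin v)) (T : KSet v k) :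
    permKSet σ (permKSet σ⁻¹ T) = T :=
  Subtype.ext (by ext; simp [permKSet, Equiv.Perm.inv_def])

lemma isHypergraphProperty_of_imp {f : HGraph v k → Bool}
    (hf : ∀ (σ : Equiv.Perm (Fin v)) (G : HGraph v k),
      f G = true → f (fun T => G (permKSet σ⁻¹ T)) = true) :
    IsHypergraphProperty f := by
  refine fun σ G => Bool.eq_iff_iff.2 ⟨fun h => ?_, hf σ G⟩
  simpa only [permKSet_permKSet_inv] using hf σ⁻¹ _ h

lemma IsIsolatedClique.perm (hS : IsIsolatedClique G S) (σ : Equiv.Perm (Fin v)) :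
    IsIsolatedClique (fun T => G (permKSet σ⁻¹ T)) (S.map σ.toEmbedding) := by
  intro T hT
  have hmap : T.1 = (permKSet σ⁻¹ T).1.map σ.toEmbedding :=
    congrArg Subtype.val (permKSet_permKSet_inv σ T).symm
  rw [hmap, ← map_inter, card_map] at hT
  rw [hS _ hT, hmap, map_subset_map]

lemma isHypergraphProperty_hasIsolatedClique (v k q : ℕ) :
    IsHypergraphProperty (hasIsolatedClique q : HGraph v k → Bool) := by
  refine isHypergraphProperty_of_imp fun σ G hG => ?_
  obtain ⟨S, hSq, hS⟩ := hasIsolatedClique_eq_true_iff.1 hG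
  exact hasIsolatedClique_eq_true_iff.2
    ⟨S.map σ.toEmbedding, (card_map _).trans hSq, hS.perm σ⟩

lemma IsIsolatedClique.update (hS : IsIsolatedClique G S) {T : KSet v k} (hT : #(T.1 ∩ S) < 2)
    (b : Bool) : IsIsolatedClique (Function.update G T b) S := by
  intro R hR
  rw [Function.update_of_ne (by rintro rfl; exact hT.not_ge hR)]
  exact hS R hR

lemma IsIsolatedClique.of_update_of_update {T T' : KSet v k} {b b' : Bool}
    (h : IsIsolatedClique (Function.update G T b) S)
    (h' : IsIsolatedClique (Function.update G T' b') S) (hne : T ≠ T') :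
    IsIsolatedClique G S := by
  intro R hR
  by_cases hRT : R = T
  · simpa only [Function.update_of_ne (hRT ▸ hne)] using h' R hR
  · simpa only [Function.update_of_ne hRT] using h R hR

lemma card_separatingSets_le_two {T T' : KSet v k} {b b' : Bool}
    (hS : IsIsolatedClique (Function.update G T b) S)
    (hS' : IsIsolatedClique (Function.update G T' b') S') : #(separatingSets k S S') ≤ 2 := by
  refine (card_le_card (t := {T.1, T'.1}) fun R hR => ?_).trans card_le_two
  obtain ⟨hRk, hRS, hRS', hRsep⟩ := mem_filter.1 hR
  let K : KSet v k := ⟨R, (mem_powersetCard.1 hRk).2⟩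
  by_contra hmem
  simp only [mem_insert, mem_singleton, not_or] at hmem
  have hKS := hS K hRS
  have hKS' := hS' K hRS'
  rw [Function.update_of_ne fun h => hmem.1 (congrArg Subtype.val h)] at hKS
  rw [Function.update_of_ne fun h => hmem.2 (congrArg Subtype.val h)] at hKS'
  exact hRsep (hKS.symm.trans hKS')

lemma card_filter_two_le_card_inter_le (v k : ℕ) (S : Finset (Fin v)) :
    #{T : KSet v k | 2 ≤ #(T.1 ∩ S)} ≤ (#S).choose 2 * v.choose (k - 2) := by
  rw [← card_map (Function.Embedding.subtype _)]
  refine (card_le_card fun R hR => ?_).trans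
    ((card_filter_le_card_inter_le univ S k 2).trans_eq (by rw [card_fin]))
  obtain ⟨T, hT, rfl⟩ := mem_map.1 hR
  exact mem_filter.2 ⟨mem_powersetCard_univ.2 T.2, (mem_filter.1 hT).2⟩

lemma localSens_hasIsolatedClique_le_of_true (hG : hasIsolatedClique q G = true) :
    localSens (hasIsolatedClique q) G ≤ q.choose 2 * v.choose (k - 2) := by
  obtain ⟨S, rfl, hS⟩ := hasIsolatedClique_eq_true_iff.1 hG
  refine (card_le_card fun T hT => ?_).trans (card_filter_two_le_card_inter_le v k S)
  refine mem_filter.2 ⟨mem_univ T, le_of_not_gt fun hlt => (mem_filter.1 hT).2 ?_⟩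
  rw [hG]
  exact hasIsolatedClique_eq_true_iff.2 ⟨S, rfl, hS.update hlt _⟩

lemma isPacking_two_of_isIsolatedClique_update {G : HGraph v 3} {𝓢 : Finset (Finset (Fin v))}
    (hq : 4 ≤ q) (hsized : (𝓢 : Set (Finset (Fin v))).Sized q)
    (hclique : ∀ S ∈ 𝓢, ∃ T b, IsIsolatedClique (Function.update G T b) S) :
    IsPacking 2 q 𝓢 := by
  refine ⟨hsized, fun S hS S' hS' hne => lt_of_not_ge fun hinter => ?_⟩
  obtain ⟨T, b, hT⟩ := hclique S hS
  obtain ⟨T', b', hT'⟩ := hclique S' hS'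
  have hcard : #S = #S' := (hsized hS).trans (hsized hS').symm
  exact (two_lt_card_separatingSets hcard (hq.trans (hsized hS).ge) hne hinter).not_ge
    (card_separatingSets_le_two hT hT')

lemma localSens_hasIsolatedClique_mul_le_of_false {G : HGraph v 3} (hq : 4 ≤ q)
    (hG : hasIsolatedClique q G = false) :
    localSens (hasIsolatedClique q) G * q.choose 2 ≤ v.choose 2 := by
  rw [localSens]
  set Z : Finset (KSet v 3) :=
    {T | hasIsolatedClique q (Function.update G T (!G T)) ≠ hasIsolatedClique q G}
  have hcompleted : ∀ T ∈ Z, ∃ S, #S = q ∧ IsIsolatedClique (Function.update G T (!G T)) S :=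
    fun T hT => hasIsolatedClique_eq_true_iff.1 (by simpa [Z, hG] using hT)
  choose! S hcard hclique using hcompleted
  have hinj : Set.InjOn S Z := by
    intro T hT T' hT' heq
    by_contra hne
    exact hasIsolatedClique_eq_false_iff.1 hG _ (hcard T hT)
      ((hclique T hT).of_update_of_update (heq ▸ hclique T' hT') hne)
  have hpacking : IsPacking 2 q (Z.image S) := by
    refine isPacking_two_of_isIsolatedClique_update (G := G) hq ?_ ?_
    · rw [coe_image]
      rintro _ ⟨T, hT, rfl⟩
      exact hcard T hT
    · exact forall_mem_image.2 fun T hT => ⟨T, _, hclique T hT⟩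
  simpa only [card_image_of_injOn hinj, Fintype.card_fin] using hpacking.card_mul_choose_le

lemma sens_hasIsolatedClique_le (hq : 4 ≤ q) :
    sens (hasIsolatedClique q : HGraph v 3 → Bool) ≤
      max (q.choose 2 * v) (v.choose 2 / q.choose 2) := by
  refine Finset.sup_le fun G _ => le_max_iff.2 ?_
  cases hG : hasIsolatedClique q G with
  | true => exact .inl (by simpa using localSens_hasIsolatedClique_le_of_true hG)
  | false =>
    exact .inr ((Nat.le_div_iff_mul_le (Nat.choose_pos (by omega))).2
      (localSens_hasIsolatedClique_mul_le_of_false hq hG))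

lemma hasIsolatedClique_empty (hk : 2 ≤ k) (hkq : k ≤ q) :
    hasIsolatedClique q (fun _ : KSet v k => false) = false := by
  refine hasIsolatedClique_eq_false_iff.2 fun S hSq hS => ?_
  obtain ⟨T, hTS, hTk⟩ := exists_subset_card_eq (hkq.trans hSq.ge)
  exact Bool.false_ne_true
    ((hS ⟨T, hTk⟩ (by rwa [inter_eq_left.2 hTS, hTk])).2 hTS)

lemma IsPacking.card_le_blockSens_hasIsolatedClique {𝓢 : Finset (Finset (Fin v))}
    (h𝓢 : IsPacking k q 𝓢) (hk : 2 ≤ k) (hkq : k ≤ q) :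
    #𝓢 ≤ blockSens (hasIsolatedClique q : HGraph v k → Bool) := by
  refine card_le_blockSens (x := fun _ => false)
    (B := fun S => univ.filter fun T : KSet v k => T.1 ⊆ S) (fun S hS => ?_) ?_
  · rw [hasIsolatedClique_empty hk hkq, ne_eq, Bool.not_eq_false, hasIsolatedClique_eq_true_iff]
    exact ⟨S, h𝓢.sized hS, fun T _ => by simp [flipBlock]⟩
  · refine fun S hS S' hS' hne => Finset.disjoint_left.2 fun T hT hT' => hne ?_
    exact h𝓢.eq_of_subset hS hS' T.2.ge (mem_filter.1 hT).2 (mem_filter.1 hT').2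

lemma prime_pow_le_blockSens_hasIsolatedClique {p : ℕ} (hp : p.Prime) (hk : 2 ≤ k) (hkq : k ≤ q)
    (hqp : q ≤ p) (hv : q * p ≤ v) :
    p ^ k ≤ blockSens (hasIsolatedClique q : HGraph v k → Bool) := by
  have : Fact p.Prime := ⟨hp⟩
  obtain ⟨𝓢, h𝓢, hcard⟩ := exists_isPacking_card_eq_pow (α := Fin v) (ZMod p) hkq
    (by rwa [ZMod.card]) (by rwa [ZMod.card, Fintype.card_fin])
  rw [ZMod.card] at hcard
  exact hcard ▸ h𝓢.card_le_blockSens_hasIsolatedClique hk hkq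

end IsolatedClique

section Asymptotics

lemma exists_prime_mul_le_and_le_two_mul {q v : ℕ} (hq : 0 < q) (hqv : 2 * q ^ 2 ≤ v) :
    ∃ p : ℕ, p.Prime ∧ q ≤ p ∧ q * p ≤ v ∧ v ≤ 2 * (q * p) := by
  have hqn : q ≤ v / (2 * q) := (Nat.le_div_iff_mul_le (by positivity)).2 (by linarith)
  obtain ⟨p, hp, hnp, hpn⟩ := Nat.exists_prime_lt_and_le_two_mul (v / (2 * q)) (by omega)
  refine ⟨p, hp, hqn.trans hnp.le, ?_, ?_⟩
  · calc q * p ≤ q * (2 * (v / (2 * q))) := by gcongr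
      _ = v / (2 * q) * (2 * q) := by ring
      _ ≤ v := Nat.div_mul_le_self _ _
  · calc v ≤ p * (2 * q) := ((Nat.div_lt_iff_lt_mul (by positivity)).1 hnp).le
      _ = 2 * (q * p) := by ring

variable {v : ℕ} {w : ℝ}

lemma sens_hasIsolatedClique_floor_le (hw : 4 ≤ w) (hv : (v : ℝ) = w ^ 4) :
    (sens (hasIsolatedClique ⌊w⌋₊ : HGraph v 3 → Bool) : ℝ) ≤ 3 * w ^ 6 := by
  have hqw : (⌊w⌋₊ : ℝ) ≤ w := Nat.floor_le (by linarith)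
  have hwq : w - 1 ≤ ⌊w⌋₊ := (Nat.sub_one_lt_floor w).le
  have hupper : ((⌊w⌋₊.choose 2 : ℕ) : ℝ) ≤ w ^ 2 := by
    rw [Nat.cast_choose_two]
    nlinarith
  have hlower : w ^ 2 / 6 ≤ ((⌊w⌋₊.choose 2 : ℕ) : ℝ) := by
    rw [Nat.cast_choose_two]
    nlinarith
  have hchoose : ((v.choose 2 : ℕ) : ℝ) ≤ w ^ 8 / 2 := by
    rw [Nat.cast_choose_two, hv]
    nlinarith [pow_nonneg (by linarith : 0 ≤ w) 4]
  refine (Nat.cast_le.2 (sens_hasIsolatedClique_le (Nat.le_floor hw))).trans ?_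
  rw [Nat.cast_max]
  refine max_le ?_ ?_
  · calc ((⌊w⌋₊.choose 2 * v : ℕ) : ℝ) ≤ w ^ 2 * w ^ 4 := by rw [Nat.cast_mul, hv]; gcongr
      _ ≤ 3 * w ^ 6 := by nlinarith [pow_nonneg (by linarith : 0 ≤ w) 6]
  · calc ((v.choose 2 / ⌊w⌋₊.choose 2 : ℕ) : ℝ) ≤ v.choose 2 / ⌊w⌋₊.choose 2 := Nat.cast_div_le
      _ ≤ (w ^ 8 / 2) / (w ^ 2 / 6) := by gcongr
      _ = 3 * w ^ 6 := by field_simp; norm_num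

lemma le_blockSens_hasIsolatedClique_floor (hw : 4 ≤ w) (hv : (v : ℝ) = w ^ 4) :
    1 / 8 * w ^ 9 ≤ (blockSens (hasIsolatedClique ⌊w⌋₊ : HGraph v 3 → Bool) : ℝ) := by
  have hqw : (⌊w⌋₊ : ℝ) ≤ w := Nat.floor_le (by linarith)
  have hq : 4 ≤ ⌊w⌋₊ := Nat.le_floor hw
  have hqv : 2 * ⌊w⌋₊ ^ 2 ≤ v := by
    rw [← Nat.cast_le (α := ℝ), hv]
    push_cast
    calc 2 * (⌊w⌋₊ : ℝ) ^ 2 ≤ w ^ 2 * w ^ 2 := by gcongr; nlinarith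
      _ = w ^ 4 := by ring
  obtain ⟨p, hp, hqp, hpv, hvp⟩ := exists_prime_mul_le_and_le_two_mul (by omega) hqv
  have hwp : w ^ 3 / 2 ≤ p := by
    refine le_of_mul_le_mul_right ?_ (by linarith : 0 < 2 * w)
    calc w ^ 3 / 2 * (2 * w) = v := by rw [hv]; ring
      _ ≤ 2 * (⌊w⌋₊ * p) := by exact_mod_cast hvp
      _ ≤ 2 * (w * p) := by gcongr
      _ = p * (2 * w) := by ring
  calc 1 / 8 * w ^ 9 = (w ^ 3 / 2) ^ 3 := by ring
    _ ≤ (p : ℝ) ^ 3 := by gcongr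
    _ ≤ _ := by
      exact_mod_cast prime_pow_le_blockSens_hasIsolatedClique hp (by omega) (by omega) hqp hpv

end Asymptotics

theorem stmt14 :
    ∃ f : (v : ℕ) → (HGraph v 3 → Bool),
      (∀ v, IsHypergraphProperty (f v)) ∧
      ∃ c C : ℝ, 0 < c ∧ 0 < C ∧ ∃ v₀ : ℕ, ∀ v : ℕ, v₀ ≤ v →
        (sens (f v) : ℝ) ≤ C * (v : ℝ) ^ ((3 : ℝ) / 2) ∧
        c * (v : ℝ) ^ ((9 : ℝ) / 4) ≤ (blockSens (f v) : ℝ) := by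
  refine ⟨fun v => hasIsolatedClique ⌊(v : ℝ) ^ ((1 : ℝ) / 4)⌋₊,
    fun v => isHypergraphProperty_hasIsolatedClique v 3 _, 1 / 8, 3, by norm_num, by norm_num,
    256, fun v hv => ?_⟩
  set w := (v : ℝ) ^ ((1 : ℝ) / 4)
  have hpow (n : ℕ) : w ^ n = (v : ℝ) ^ ((1 : ℝ) / 4 * n) :=
    (Real.rpow_mul_natCast v.cast_nonneg _ n).symm
  have hw4 : (v : ℝ) = w ^ 4 := by rw [hpow]; norm_num
  have hw6 : (v : ℝ) ^ ((3 : ℝ) / 2) = w ^ 6 := by rw [hpow]; norm_num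
  have hw9 : (v : ℝ) ^ ((9 : ℝ) / 4) = w ^ 9 := by rw [hpow]; norm_num
  have hw_ge : 4 ≤ w := by
    refine le_of_pow_le_pow_left₀ (n := 4) (by norm_num) (by positivity) ?_
    rw [← hw4]
    exact_mod_cast hv
  rw [hw6, hw9]
  exact ⟨sens_hasIsolatedClique_floor_le hw_ge hw4, le_blockSens_hasIsolatedClique_floor hw_ge hw4⟩
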